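/- Pointwise lower bound for the v-component in the Duhamel formulation of the quadratically coupled system (inequality (7.4) of the paper). Let d₁, d₂ > 0, c₁, c₂ ∈ ℝ, T ∈ (0,∞], ν₀, α > 0, and set d_m = min(d₁, d₂). Let u₀, v₀ : ℝ → [0,∞) be measurable with u₀(y) ≥ ν₀ e^{−αy²} for all y ∈ ℝ, and let u, v : ℝ × [0,T) → [0,∞) be measurable functions satisfying, for all x ∈ ℝ and t ∈ (0,T), u(x,t) = ∫_ℝ θ_{d₁,c₁}(x−y,t) u₀(y) dy + ∫_0^t ∫_ℝ θ_{d₁,c₁}(x−y,t−s) v(y,s)² dy ds and v(x,t) = ∫_ℝ θ_{d₂,c₂}(x−y,t) v₀(y) dy + ∫_0^t ∫_ℝ θ_{d₂,c₂}(x−y,t−s) u(y,s)² dy ds. Then for all x ∈ ℝ and t ∈ (0,T): v(x,t) ≥ ( ν₀² d_m^{3/2} / ( d₁ √(2 d₂) ) ) ∫_0^t exp( −2α(x + c₂t + s(c₁−c₂))²/(1 + 4α d_m t) ) / √( (1 + 4α d_m s)(1 + 4α d_m t) ) ds. -/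

import Mathlib

open MeasureTheory Set

noncomputable section

/-- The drifting heat kernel `θ_{d,c}(x,t) = e^{−(x+ct)²/(4dt)}/√(4πdt)`. -/
def driftKernel (d c x t : ℝ) : ℝ :=
  Real.exp (-(x + c * t) ^ 2 / (4 * d * t)) / Real.sqrt (4 * Real.pi * d * t)

lemma driftKernel_nonneg' (d c x t : ℝ) : 0 ≤ driftKernel d c x t := by
  unfold driftKernel; positivity

lemma gauss_conv (d c t x β b : ℝ) (hd : 0 < d) (ht : 0 < t) (hβ : 0 < β) :
    ∫ y : ℝ, driftKernel d c (x - y) t * Real.exp (-(β * (y + b) ^ 2)) =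
      Real.exp (-(β * (x + c * t + b) ^ 2) / (1 + 4 * β * d * t)) /
        Real.sqrt (1 + 4 * β * d * t) := by
  have hS : 0 < 1 + 4 * β * d * t := by positivity
  have h1 : ∀ y : ℝ, driftKernel d c (x - y) t * Real.exp (-(β * (y + b) ^ 2)) =
      (Real.exp (-(β * (x + c * t + b) ^ 2) / (1 + 4 * β * d * t)) /
        Real.sqrt (4 * Real.pi * d * t)) *
      Real.exp (-((1 + 4 * β * d * t) / (4 * d * t)) *
        (y - (x + c * t - 4 * β * d * t * b) / (1 + 4 * β * d * t)) ^ 2) := by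
    intro y
    unfold driftKernel
    rw [div_mul_eq_mul_div, div_mul_eq_mul_div, ← Real.exp_add, ← Real.exp_add]
    congr 2
    field_simp
    ring
  simp_rw [h1]
  rw [integral_const_mul,
    integral_sub_right_eq_self (fun y => Real.exp (-((1 + 4 * β * d * t) / (4 * d * t)) * y ^ 2)),
    integral_gaussian, div_mul_eq_mul_div, mul_div_assoc, div_eq_mul_inv (Real.exp _)]
  congr 1
  rw [← Real.sqrt_div' _ (by positivity), ← Real.sqrt_inv]
  congr 1
  have := Real.pi_pos
  field_simp

lemma kernel_lower (d m c x t : ℝ) (hm : 0 < m) (hmd : m ≤ d) (ht : 0 < t) :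
    Real.sqrt (m / d) * driftKernel m c x t ≤ driftKernel d c x t := by
  have hd : 0 < d := hm.trans_le hmd
  have hpi := Real.pi_pos
  unfold driftKernel
  have e : Real.sqrt (m / d) * (Real.exp (-(x + c * t) ^ 2 / (4 * m * t)) /
      Real.sqrt (4 * Real.pi * m * t)) =
      Real.exp (-(x + c * t) ^ 2 / (4 * m * t)) / Real.sqrt (4 * Real.pi * d * t) := by
    rw [mul_div_left_comm, div_eq_mul_inv (Real.exp _), ← Real.sqrt_div' _ (by positivity),
      ← Real.sqrt_inv]
    congr 2
    field_simp
  rw [e]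
  gcongr Real.exp ?_ / _
  rw [neg_div, neg_div, neg_le_neg_iff]
  gcongr

lemma key (d m c t x β b K : ℝ) (hm : 0 < m) (hmd : m ≤ d) (ht : 0 < t) (hβ : 0 < β)
    (hK : 0 ≤ K) (g : ℝ → ℝ)
    (hg : Integrable (fun y : ℝ => driftKernel d c (x - y) t * g y))
    (h : ∀ y, K * Real.exp (-(β * (y + b) ^ 2)) ≤ g y) :
    K * Real.sqrt (m / d) * (Real.exp (-(β * (x + c * t + b) ^ 2) / (1 + 4 * β * m * t)) /
        Real.sqrt (1 + 4 * β * m * t)) ≤ ∫ y : ℝ, driftKernel d c (x - y) t * g y := by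
  rw [← gauss_conv m c t x β b hm ht hβ, ← integral_const_mul]
  refine integral_mono_of_nonneg (Filter.Eventually.of_forall fun y => ?_) hg
    (Filter.Eventually.of_forall fun y => ?_)
  · have := driftKernel_nonneg' m c (x - y) t
    simp only [Pi.zero_apply]
    positivity
  · have h0 := driftKernel_nonneg' d c (x - y) t
    have h1 := kernel_lower d m c (x - y) t hm hmd ht
    calc K * Real.sqrt (m / d) * (driftKernel m c (x - y) t * Real.exp (-(β * (y + b) ^ 2)))
        = (Real.sqrt (m / d) * driftKernel m c (x - y) t) *
          (K * Real.exp (-(β * (y + b) ^ 2))) := by ring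
      _ ≤ driftKernel d c (x - y) t * g y := by
        apply mul_le_mul h1 (h y) (by positivity) h0

lemma const_lower (d₁ d₂ m ν a s t X : ℝ) (hd₁ : 0 < d₁) (hd₂ : 0 < d₂) (hm : 0 < m)
    (ha : 0 < a) (hs : 0 < s) (hst : s < t) :
    ν ^ 2 * m ^ ((3 : ℝ) / 2) / (d₁ * Real.sqrt (2 * d₂)) *
      (Real.exp (-(2 * a * X ^ 2) / (1 + 4 * a * m * t)) /
        Real.sqrt ((1 + 4 * a * m * s) * (1 + 4 * a * m * t))) ≤
    (ν ^ 2 * (m / d₁) / (1 + 4 * a * m * s)) * Real.sqrt (m / d₂) *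
      (Real.exp (-(2 * a / (1 + 4 * a * m * s) * X ^ 2) /
        (1 + 4 * (2 * a / (1 + 4 * a * m * s)) * m * (t - s))) /
        Real.sqrt (1 + 4 * (2 * a / (1 + 4 * a * m * s)) * m * (t - s))) := by
  have ht : 0 < t := hs.trans hst
  have hts : 0 < t - s := sub_pos.2 hst
  have hP : 0 < 1 + 4 * a * m * s := by positivity
  have hQ : 0 < 1 + 4 * a * m * t := by positivity
  have hamt : 0 < a * m * (t - s) := by positivity
  set P := 1 + 4 * a * m * s with hPd
  set Q := 1 + 4 * a * m * t with hQd
  have hR : 1 + 4 * (2 * a / P) * m * (t - s) = (2 * Q - P) / P := by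
    rw [hQd]; field_simp; rw [hPd]; ring
  have hPQ : P ≤ Q := by rw [hPd, hQd]; nlinarith
  have hR0 : 0 < 2 * Q - P := by linarith
  rw [hR]
  have he : -(2 * a / P * X ^ 2) / ((2 * Q - P) / P) = -(2 * a * X ^ 2) / (2 * Q - P) := by
    field_simp
  rw [he]
  have hexp : Real.exp (-(2 * a * X ^ 2) / Q) ≤ Real.exp (-(2 * a * X ^ 2) / (2 * Q - P)) := by
    apply Real.exp_le_exp.2
    rw [neg_div, neg_div, neg_le_neg_iff]
    gcongr
    linarith
  have hm32 : m ^ ((3 : ℝ) / 2) = m * Real.sqrt m := by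
    rw [Real.sqrt_eq_rpow, show (3 : ℝ) / 2 = 1 + 1 / 2 by norm_num, Real.rpow_add hm,
      Real.rpow_one]
  have hsP : Real.sqrt P * Real.sqrt P = P := Real.mul_self_sqrt hP.le
  have hL : ν ^ 2 * m ^ ((3 : ℝ) / 2) / (d₁ * Real.sqrt (2 * d₂)) *
      (Real.exp (-(2 * a * X ^ 2) / Q) / Real.sqrt (P * Q)) =
      (ν ^ 2 * m / d₁) * (Real.sqrt m / (Real.sqrt d₂ * Real.sqrt P)) *
        (Real.exp (-(2 * a * X ^ 2) / Q) / Real.sqrt (2 * Q)) := by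
    rw [hm32, Real.sqrt_mul (by norm_num), Real.sqrt_mul hP.le, Real.sqrt_mul (by norm_num)]
    field_simp
  have hRR : (ν ^ 2 * (m / d₁) / P) * Real.sqrt (m / d₂) *
      (Real.exp (-(2 * a * X ^ 2) / (2 * Q - P)) / Real.sqrt ((2 * Q - P) / P)) =
      (ν ^ 2 * m / d₁) * (Real.sqrt m / (Real.sqrt d₂ * Real.sqrt P)) *
        (Real.exp (-(2 * a * X ^ 2) / (2 * Q - P)) / Real.sqrt (2 * Q - P)) := by
    rw [Real.sqrt_div hm.le, Real.sqrt_div hR0.le]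
    have := Real.sqrt_pos.2 hP
    have := Real.sqrt_pos.2 hR0
    have := Real.sqrt_pos.2 hd₂
    nth_rewrite 1 [← hsP]
    field_simp
  rw [hL, hRR]
  have := Real.sqrt_pos.2 hR0
  gcongr
  linarith

/-- Pointwise lower bound for the `v`-component in the Duhamel formulation of the
quadratically coupled system (inequality (7.4) of the paper). -/
theorem duhamel_lower_bound_v_component
    (d₁ d₂ c₁ c₂ ν₀ a : ℝ) (hd₁ : 0 < d₁) (hd₂ : 0 < d₂)
    (hν₀ : 0 < ν₀) (ha : 0 < a) (T : ENNReal) (hT : 0 < T)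
    (u₀ v₀ : ℝ → ℝ) (hu₀m : Measurable u₀) (hv₀m : Measurable v₀)
    (hu₀pos : ∀ y : ℝ, 0 ≤ u₀ y) (hv₀pos : ∀ y : ℝ, 0 ≤ v₀ y)
    (hu₀lb : ∀ y : ℝ, ν₀ * Real.exp (-(a * y ^ 2)) ≤ u₀ y)
    (u v : ℝ → ℝ → ℝ)
    (hum : Measurable fun p : ℝ × ℝ => u p.1 p.2)
    (hvm : Measurable fun p : ℝ × ℝ => v p.1 p.2)
    (hupos : ∀ x t : ℝ, 0 ≤ t → ENNReal.ofReal t < T → 0 ≤ u x t)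
    (hvpos : ∀ x t : ℝ, 0 ≤ t → ENNReal.ofReal t < T → 0 ≤ v x t)
    -- finiteness of all the integrals appearing in the Duhamel formulation
    (hInt₁ : ∀ x t : ℝ, 0 < t → ENNReal.ofReal t < T →
      Integrable (fun y : ℝ => driftKernel d₁ c₁ (x - y) t * u₀ y))
    (hInt₂ : ∀ x t : ℝ, 0 < t → ENNReal.ofReal t < T →
      Integrable (fun y : ℝ => driftKernel d₂ c₂ (x - y) t * v₀ y))
    (hInt₃ : ∀ x t : ℝ, 0 < t → ENNReal.ofReal t < T →
      IntegrableOn (fun p : ℝ × ℝ =>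
        driftKernel d₁ c₁ (x - p.2) (t - p.1) * (v p.2 p.1) ^ 2)
        (Set.Ioo (0 : ℝ) t ×ˢ Set.univ))
    (hInt₄ : ∀ x t : ℝ, 0 < t → ENNReal.ofReal t < T →
      IntegrableOn (fun p : ℝ × ℝ =>
        driftKernel d₂ c₂ (x - p.2) (t - p.1) * (u p.2 p.1) ^ 2)
        (Set.Ioo (0 : ℝ) t ×ˢ Set.univ))
    -- the Duhamel formulation
    (hDuhU : ∀ x t : ℝ, 0 < t → ENNReal.ofReal t < T →
      u x t = (∫ y : ℝ, driftKernel d₁ c₁ (x - y) t * u₀ y) +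
        ∫ s in Set.Ioo (0 : ℝ) t, ∫ y : ℝ,
          driftKernel d₁ c₁ (x - y) (t - s) * (v y s) ^ 2)
    (hDuhV : ∀ x t : ℝ, 0 < t → ENNReal.ofReal t < T →
      v x t = (∫ y : ℝ, driftKernel d₂ c₂ (x - y) t * v₀ y) +
        ∫ s in Set.Ioo (0 : ℝ) t, ∫ y : ℝ,
          driftKernel d₂ c₂ (x - y) (t - s) * (u y s) ^ 2) :
    ∀ x t : ℝ, 0 < t → ENNReal.ofReal t < T →
      ν₀ ^ 2 * min d₁ d₂ ^ ((3 : ℝ) / 2) / (d₁ * Real.sqrt (2 * d₂)) *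
        (∫ s in Set.Ioo (0 : ℝ) t,
          Real.exp (-(2 * a * (x + c₂ * t + s * (c₁ - c₂)) ^ 2) /
              (1 + 4 * a * min d₁ d₂ * t)) /
            Real.sqrt ((1 + 4 * a * min d₁ d₂ * s) * (1 + 4 * a * min d₁ d₂ * t))) ≤
      v x t := by
  intro x t ht htT
  have hm : 0 < min d₁ d₂ := lt_min hd₁ hd₂
  have hm1 : min d₁ d₂ ≤ d₁ := min_le_left _ _
  have hm2 : min d₁ d₂ ≤ d₂ := min_le_right _ _
  generalize min d₁ d₂ = m at hm hm1 hm2 ⊢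
  have hI := hInt₄ x t ht htT
  rw [IntegrableOn, Measure.volume_eq_prod, ← Measure.prod_restrict, Measure.restrict_univ] at hI
  have hout := hI.integral_prod_left
  have hin := hI.prod_right_ae
  have hu : ∀ y s, 0 < s → s < t →
      (ν₀ ^ 2 * (m / d₁) / (1 + 4 * a * m * s)) *
        Real.exp (-(2 * a / (1 + 4 * a * m * s) * (y + c₁ * s) ^ 2)) ≤ (u y s) ^ 2 := by
    intro y s hs hst
    have hsT : ENNReal.ofReal s < T := (ENNReal.ofReal_le_ofReal hst.le).trans_lt htT
    have h1 := key d₁ m c₁ s y a 0 ν₀ hm hm1 hs ha hν₀.le u₀ (hInt₁ y s hs hsT)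
      (by simpa using hu₀lb)
    have h2 : 0 ≤ ∫ r in Set.Ioo (0 : ℝ) s, ∫ z : ℝ,
          driftKernel d₁ c₁ (y - z) (s - r) * (v z r) ^ 2 :=
      integral_nonneg fun r => integral_nonneg fun z =>
        mul_nonneg (driftKernel_nonneg' _ _ _ _) (sq_nonneg _)
    have hP : 0 < 1 + 4 * a * m * s := by positivity
    have h3 := h1.trans (le_add_of_nonneg_right h2)
    rw [← hDuhU y s hs hsT, add_zero] at h3
    have h4 := pow_le_pow_left₀ (by positivity) h3 2
    refine le_trans (le_of_eq ?_) h4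
    rw [mul_pow, mul_pow, div_pow, Real.sq_sqrt (by positivity), Real.sq_sqrt hP.le,
      ← Real.exp_nat_mul, div_mul_eq_mul_div, mul_div_assoc]
    congr 3
    push_cast
    field_simp
  rw [hDuhV x t ht htT]
  have h0 : 0 ≤ ∫ y : ℝ, driftKernel d₂ c₂ (x - y) t * v₀ y :=
    integral_nonneg fun y => mul_nonneg (driftKernel_nonneg' _ _ _ _) (hv₀pos y)
  refine le_trans ?_ (le_add_of_nonneg_left h0)
  rw [← integral_const_mul]
  refine integral_mono_of_nonneg ?_ hout ?_
  · filter_upwards with s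
    simp only [Pi.zero_apply]
    positivity
  · filter_upwards [hin, ae_restrict_mem measurableSet_Ioo] with s hs hs'
    have hP : 0 < 1 + 4 * a * m * s := by have := hs'.1; positivity
    have h1 := key d₂ m c₂ (t - s) x (2 * a / (1 + 4 * a * m * s)) (c₁ * s)
      (ν₀ ^ 2 * (m / d₁) / (1 + 4 * a * m * s)) hm hm2 (sub_pos.2 hs'.2) (by positivity)
      (by positivity) (fun y => (u y s) ^ 2) hs (fun y => hu y s hs'.1 hs'.2)
    refine le_trans ?_ h1
    have e : x + c₂ * (t - s) + c₁ * s = x + c₂ * t + s * (c₁ - c₂) := by ring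
    rw [e]
    exact const_lower d₁ d₂ m ν₀ a s t _ hd₁ hd₂ hm ha hs'.1 hs'.2
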